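/- Every maximum partial triple system of order 17 of Type-N has automorphism group of order at most 2. -/

import Mathlib

def isPTS {n : ℕ} (B : Finset (Finset (Fin n))) : Prop :=
  (∀ T ∈ B, T.card = 3) ∧
  ∀ p : Finset (Fin n), p.card = 2 → ∀ T₁ ∈ B, ∀ T₂ ∈ B, p ⊆ T₁ → p ⊆ T₂ → T₁ = T₂

def isMMPTS {n : ℕ} (B : Finset (Finset (Fin n))) : Prop :=
  isPTS B ∧ ∀ B' : Finset (Finset (Fin n)), isPTS B' → B'.card ≤ B.card

def leave {n : ℕ} (B : Finset (Finset (Fin n))) : Set (Finset (Fin n)) :=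
  {p | p.card = 2 ∧ ∀ T ∈ B, ¬ p ⊆ T}

def isTypeQ {n : ℕ} (B : Finset (Finset (Fin n))) : Prop :=
  ∃ a b c d : Fin n, a ≠ b ∧ a ≠ c ∧ a ≠ d ∧ b ≠ c ∧ b ≠ d ∧ c ≠ d ∧
    leave B = {{a, b}, {b, c}, {c, d}, {d, a}} ∧
    ∃ e : Fin n, ({a, c, e} : Finset (Fin n)) ∈ B ∧ ({b, d, e} : Finset (Fin n)) ∈ B

def isAuto {n : ℕ} (B : Finset (Finset (Fin n))) (φ : Equiv.Perm (Fin n)) : Prop :=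
  ∀ T ∈ B, T.image φ ∈ B

/-!
Every nontrivial automorphism is an odd permutation, so the sign embeds the automorphism group
into `{1, -1}`. The fixed points of an automorphism form a subsystem. If it contains the points
`a, b, c, d` of the leave, it also contains the third points of `{a, c}` and `{b, d}`, which are
distinct for Type-N; a count modulo 6 then gives at least 11 points, whereas a proper subsystem has
at most 8. Hence an automorphism is determined by its action on the 4-cycle and has order 1, 2
or 4. The fixed points of an involution form a Steiner triple system on at most 8 points. It does
not consist of one point `x`, since then `x` would be the third point of both diagonals. So an
involution fixes 3 or 7 points, is a product of 7 or 5 transpositions, and is odd; in particular it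
is not the square of an automorphism.
-/

open Finset

section ThirdPoint

variable {n : ℕ} {B : Finset (Finset (Fin n))} {x y z w : Fin n} {T : Finset (Fin n)}

theorem isPTS.ne_of_mem (hB : isPTS B) (h : {x, y, z} ∈ B) : x ≠ y ∧ x ≠ z ∧ y ≠ z := by
  have hcard := hB.1 _ h
  grind

theorem isPTS.eq_of_mem_of_mem (hB : isPTS B) (hz : {x, y, z} ∈ B) (hw : {x, y, w} ∈ B) :
    z = w := by
  have hxy := (hB.ne_of_mem hz).1
  have heq : ({x, y, z} : Finset (Fin n)) = {x, y, w} :=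
    hB.2 {x, y} (card_pair hxy) _ hz _ hw (by grind) (by grind)
  have hne := hB.ne_of_mem hz
  have hmem : z ∈ ({x, y, w} : Finset (Fin n)) := heq ▸ by simp
  grind

theorem isPTS.exists_eq_triple (hB : isPTS B) (hT : T ∈ B) (hx : x ∈ T) (hy : y ∈ T)
    (hxy : x ≠ y) : ∃ z, T = {x, y, z} := by
  have hcard := hB.1 T hT
  obtain ⟨z, hz⟩ : ∃ z, (T.erase x).erase y = {z} := card_eq_one.1 (by grind)
  exact ⟨z, by grind⟩

/-- The leave of `B` as a graph on the points. -/
def leaveGraph (B : Finset (Finset (Fin n))) : SimpleGraph (Fin n) where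
  Adj x y := {x, y} ∈ leave B
  symm := ⟨fun x y h => by rwa [pair_comm]⟩
  loopless := ⟨fun x h => by simpa using h.1⟩

instance : DecidableRel (leaveGraph B).Adj := fun x y =>
  inferInstanceAs (Decidable (#{x, y} = 2 ∧ ∀ T ∈ B, ¬ {x, y} ⊆ T))

theorem isPTS.leaveGraph_adj_iff (hB : isPTS B) :
    (leaveGraph B).Adj x y ↔ x ≠ y ∧ ∀ z, {x, y, z} ∉ B := by
  constructor
  · refine fun h => ⟨h.ne, fun z hz => h.2 _ hz (by grind)⟩
  · rintro ⟨hxy, h⟩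
    refine ⟨card_pair hxy, fun T hT hsub => ?_⟩
    obtain ⟨z, rfl⟩ := hB.exists_eq_triple hT (hsub (by simp)) (hsub (by simp)) hxy
    exact h z hT

open Classical in
/-- The product of the partial Steiner quasigroup of `B`: the third point of the triple through
`x` and `y`. If there is no such triple the value is `y`, so that `third B x` is an involution. -/
noncomputable def third (B : Finset (Finset (Fin n))) (x y : Fin n) : Fin n :=
  if h : ∃ z, {x, y, z} ∈ B then h.choose else y

theorem isPTS.third_eq_of_mem (hB : isPTS B) (h : {x, y, z} ∈ B) : third B x y = z := by
  have hex : ∃ z, {x, y, z} ∈ B := ⟨z, h⟩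
  rw [third, dif_pos hex]
  exact hB.eq_of_mem_of_mem hex.choose_spec h

theorem isPTS.third_mem (hB : isPTS B) (hxy : x ≠ y) (h : ¬ (leaveGraph B).Adj x y) :
    {x, y, third B x y} ∈ B := by
  obtain ⟨z, hz⟩ : ∃ z, {x, y, z} ∈ B := by simpa [hB.leaveGraph_adj_iff, hxy] using h
  rwa [hB.third_eq_of_mem hz]

theorem isPTS.third_of_adj (hB : isPTS B) (h : (leaveGraph B).Adj x y) : third B x y = y := by
  rw [third, dif_neg (not_exists.2 (hB.leaveGraph_adj_iff.1 h).2)]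

theorem isPTS.third_self (hB : isPTS B) (x : Fin n) : third B x x = x := by
  rw [third, dif_neg]
  rintro ⟨z, hz⟩
  exact (hB.ne_of_mem hz).1 rfl

theorem isPTS.third_involutive (hB : isPTS B) (x : Fin n) : Function.Involutive (third B x) := by
  intro y
  obtain rfl | hxy := eq_or_ne x y
  · rw [hB.third_self, hB.third_self]
  by_cases h : (leaveGraph B).Adj x y
  · rw [hB.third_of_adj h, hB.third_of_adj h]
  · exact hB.third_eq_of_mem (pair_comm y (third B x y) ▸ hB.third_mem hxy h)

theorem isPTS.third_comm (hB : isPTS B) (h : ¬ (leaveGraph B).Adj x y) :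
    third B x y = third B y x := by
  obtain rfl | hxy := eq_or_ne x y
  · rfl
  · exact (hB.third_eq_of_mem (insert_comm x y {third B x y} ▸ hB.third_mem hxy h)).symm

end ThirdPoint

section Subsystems

variable {n : ℕ} {B : Finset (Finset (Fin n))} {F : Finset (Fin n)} {x w : Fin n}

/-- `F` is the point set of a subsystem of `B`: every triple of `B` that meets `F` in two points
lies in `F`. -/
def IsSubsystem (B : Finset (Finset (Fin n))) (F : Finset (Fin n)) : Prop :=
  ∀ x ∈ F, ∀ y ∈ F, third B x y ∈ F

theorem isSubsystem_univ (B : Finset (Finset (Fin n))) : IsSubsystem B univ :=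
  fun _ _ _ _ => mem_univ _

theorem isPTS.biUnion_erase_eq (hB : isPTS B) (hF : IsSubsystem B F) (hx : x ∈ F) :
    ({T ∈ B | T ⊆ F ∧ x ∈ T}.biUnion fun T => T.erase x) =
      F.erase x \ (leaveGraph B).neighborFinset x := by
  ext y
  simp only [mem_biUnion, mem_filter, mem_erase, mem_sdiff, SimpleGraph.mem_neighborFinset]
  constructor
  · rintro ⟨T, ⟨hT, hTF, hxT⟩, hyx, hyT⟩
    refine ⟨⟨hyx, hTF hyT⟩, fun h => ?_⟩
    exact h.2 T hT (by grind)
  · rintro ⟨⟨hyx, hy⟩, h⟩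
    have hclosed := hF x hx y hy
    exact ⟨_, ⟨hB.third_mem hyx.symm h, by grind, by simp⟩, hyx, by simp⟩

/-- The triples of the subsystem through `x` pair off the points of `F` other than `x` and its
neighbours in the leave. -/
theorem isPTS.card_subsystem_eq (hB : isPTS B) (hF : IsSubsystem B F) (hx : x ∈ F) :
    #F = 1 + #((leaveGraph B).neighborFinset x ∩ F) + 2 * #{T ∈ B | T ⊆ F ∧ x ∈ T} := by
  have hdisj : (({T ∈ B | T ⊆ F ∧ x ∈ T} : Finset _) : Set (Finset (Fin n))).PairwiseDisjoint
      fun T => T.erase x := by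
    intro T hT S hS hne
    simp only [mem_coe, mem_filter] at hT hS
    refine disjoint_left.2 fun y hyT hyS => hne ?_
    rw [mem_erase] at hyT hyS
    exact hB.2 {x, y} (card_pair hyT.1.symm) T hT.1 S hS.1 (by grind) (by grind)
  have hcover := congrArg card (hB.biUnion_erase_eq hF hx)
  have hpair : ∀ T ∈ ({T ∈ B | T ⊆ F ∧ x ∈ T} : Finset _), #(T.erase x) = 2 := fun T hT => by
    rw [mem_filter] at hT
    rw [card_erase_of_mem hT.2.2, hB.1 T hT.1]
  rw [card_biUnion hdisj, sum_congr rfl hpair, sum_const, smul_eq_mul] at hcover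
  have hsplit := card_sdiff_add_card_inter (F.erase x) ((leaveGraph B).neighborFinset x)
  have hinter : F.erase x ∩ (leaveGraph B).neighborFinset x =
      (leaveGraph B).neighborFinset x ∩ F := by
    rw [erase_inter, inter_comm, erase_eq_of_notMem (by simp)]
  rw [hinter, card_erase_of_mem hx] at hsplit
  have hpos := card_pos.2 ⟨x, hx⟩
  omega

theorem isPTS.card_subsystem_mul_self (hB : isPTS B) (hF : IsSubsystem B F) :
    #F * #F = #F + ∑ x ∈ F, #((leaveGraph B).neighborFinset x ∩ F) + 6 * #{T ∈ B | T ⊆ F} := by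
  have hflags : ∑ x ∈ F, #{T ∈ B | T ⊆ F ∧ x ∈ T} = #{T ∈ B | T ⊆ F} * 3 := by
    simp only [← filter_filter]
    refine (sum_card_bipartiteAbove_eq_sum_card_bipartiteBelow (· ∈ ·)).trans ?_
    refine sum_const_nat fun T hT => ?_
    rw [mem_filter] at hT
    rw [bipartiteBelow, filter_mem_eq_inter, inter_eq_right.2 hT.2, hB.1 T hT.1]
  calc #F * #F = ∑ _x ∈ F, #F := by rw [sum_const, smul_eq_mul]
    _ = ∑ x ∈ F, (1 + #((leaveGraph B).neighborFinset x ∩ F) + 2 * #{T ∈ B | T ⊆ F ∧ x ∈ T}) :=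
      sum_congr rfl fun x hx => hB.card_subsystem_eq hF hx
    _ = #F + ∑ x ∈ F, #((leaveGraph B).neighborFinset x ∩ F) + 6 * #{T ∈ B | T ⊆ F} := by
      rw [sum_add_distrib, sum_add_distrib, ← mul_sum, hflags, sum_const, smul_eq_mul]
      ring

/-- Outside of `F`, the points `third B w z` with `z ∈ F` not adjacent to `w` are distinct. -/
theorem isPTS.two_mul_card_subsystem_lt (hB : isPTS B) (hF : IsSubsystem B F) (hw : w ∉ F) :
    2 * #F < n + #((leaveGraph B).neighborFinset w ∩ F) := by
  have hmaps : ∀ z ∈ F \ (leaveGraph B).neighborFinset w, third B w z ∈ (insert w F)ᶜ := by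
    intro z hz
    simp only [mem_sdiff, SimpleGraph.mem_neighborFinset] at hz
    obtain ⟨hzF, hadj⟩ := hz
    have hwz : w ≠ z := fun h => hw (h ▸ hzF)
    simp only [mem_compl, mem_insert, not_or]
    refine ⟨(hB.ne_of_mem (hB.third_mem hwz hadj)).2.1.symm, fun hmem => hw ?_⟩
    have hback := hF z hzF _ hmem
    rwa [hB.third_comm hadj, hB.third_involutive] at hback
  have hle := card_le_card_of_injOn _ hmaps (hB.third_involutive w).injective.injOn
  rw [card_compl, card_insert_of_notMem hw, Fintype.card_fin] at hle
  have hsplit := card_sdiff_add_card_inter F ((leaveGraph B).neighborFinset w)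
  rw [inter_comm] at hsplit
  have hlt : #F < n := by simpa using card_lt_univ_of_notMem hw
  omega

end Subsystems

section FourCycles

variable {V : Type*} {G : SimpleGraph V} {a b c d x y : V}

theorem iso_apply_mem_support (f : G ≃g G) (hx : x ∈ G.support) : f x ∈ G.support := by
  obtain ⟨y, hxy⟩ := hx
  exact ⟨f y, f.map_adj_iff.2 hxy⟩

/-- The edges of `G` are those of the 4-cycle on the distinct vertices `a, b, c, d`. It is encoded
as the complete bipartite graph between the diagonals `{a, c}` and `{b, d}`. -/
structure IsFourCycle (G : SimpleGraph V) (a b c d : V) : Prop where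
  ne_ac : a ≠ c
  ne_bd : b ≠ d
  adj_iff : ∀ x y, G.Adj x y ↔
    (x = a ∨ x = c) ∧ (y = b ∨ y = d) ∨ (x = b ∨ x = d) ∧ (y = a ∨ y = c)

namespace IsFourCycle

theorem rotate (h : IsFourCycle G a b c d) : IsFourCycle G b c d a :=
  ⟨h.ne_bd, h.ne_ac.symm, fun x y => by rw [h.adj_iff]; tauto⟩

theorem reflect (h : IsFourCycle G a b c d) : IsFourCycle G a d c b :=
  ⟨h.ne_ac, h.ne_bd.symm, fun x y => by rw [h.adj_iff]; tauto⟩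

theorem exists_of_adj (h : IsFourCycle G a b c d) (hxy : G.Adj x y) :
    ∃ z w, IsFourCycle G x y z w := by
  obtain ⟨rfl | rfl, rfl | rfl⟩ | ⟨rfl | rfl, rfl | rfl⟩ := (h.adj_iff x y).1 hxy
  exacts [⟨_, _, h⟩, ⟨_, _, h.reflect⟩, ⟨_, _, h.rotate.rotate.reflect⟩, ⟨_, _, h.rotate.rotate⟩,
    ⟨_, _, h.rotate.reflect⟩, ⟨_, _, h.rotate⟩, ⟨_, _, h.rotate.rotate.rotate⟩,
    ⟨_, _, h.rotate.rotate.rotate.reflect⟩]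

theorem adj (h : IsFourCycle G a b c d) : G.Adj a b :=
  (h.adj_iff a b).2 (by simp)

theorem pairwise_ne (h : IsFourCycle G a b c d) :
    a ≠ b ∧ a ≠ c ∧ a ≠ d ∧ b ≠ c ∧ b ≠ d ∧ c ≠ d :=
  ⟨h.adj.ne, h.ne_ac, h.reflect.adj.ne, h.rotate.adj.ne, h.ne_bd, h.rotate.rotate.adj.ne⟩

theorem adj_left_iff (h : IsFourCycle G a b c d) : G.Adj a x ↔ x = b ∨ x = d := by
  simp [h.adj_iff, h.adj.ne, h.reflect.adj.ne]

theorem not_adj_diagonal (h : IsFourCycle G a b c d) : ¬ G.Adj a c := by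
  simp [h.adj_left_iff, h.rotate.adj.ne', h.rotate.rotate.adj.ne]

theorem mem_support_iff (h : IsFourCycle G a b c d) :
    x ∈ G.support ↔ x = a ∨ x = b ∨ x = c ∨ x = d := by
  simp only [SimpleGraph.mem_support, h.adj_iff]
  grind

theorem mem_support (h : IsFourCycle G a b c d) : a ∈ G.support :=
  ⟨b, h.adj⟩

theorem eq_opposite (h : IsFourCycle G a b c d) (hx : x ∈ G.support) (hxa : x ≠ a)
    (hadj : ¬ G.Adj a x) : x = c := by
  rw [h.mem_support_iff] at hx
  rw [h.adj_left_iff] at hadj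
  tauto

section Automorphism

variable (f : G ≃g G)

theorem apply_opposite_of_apply_eq (h : IsFourCycle G a b c d) (ha : f a = a) : f c = c := by
  refine h.eq_opposite (iso_apply_mem_support f h.rotate.rotate.mem_support) ?_ ?_
  · exact fun hc => h.ne_ac (f.injective (ha.trans hc.symm))
  · rw [← ha, f.map_adj_iff]
    exact h.not_adj_diagonal

theorem apply_apply_of_mem_diagonal (h : IsFourCycle G a b c d) (ha : f a = a ∨ f a = c) :
    f (f a) = a := by
  obtain ha | ha := ha
  · rw [ha, ha]
  · rw [ha]
    refine h.rotate.rotate.eq_opposite (iso_apply_mem_support f h.rotate.rotate.mem_support) ?_ ?_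
    · exact fun hc => h.ne_ac (f.injective (ha.trans hc.symm))
    · rw [← ha, f.map_adj_iff, ha]
      exact h.not_adj_diagonal

theorem apply_apply_mem_diagonal (h : IsFourCycle G a b c d) :
    f (f a) = a ∨ f (f a) = c := by
  by_cases hadj : G.Adj a (f a)
  · have hadj' := f.map_adj_iff.2 hadj
    rcases h.adj_left_iff.1 hadj with hb | hd
    · rw [hb] at hadj' ⊢
      exact (h.rotate.adj_left_iff.1 hadj').symm
    · rw [hd] at hadj' ⊢
      exact h.reflect.rotate.adj_left_iff.1 hadj' |>.symm
  · left
    refine h.apply_apply_of_mem_diagonal f ?_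
    by_contra! hne
    exact hne.2 (h.eq_opposite (iso_apply_mem_support f h.mem_support) hne.1 hadj)

theorem apply_four (h : IsFourCycle G a b c d) : f (f (f (f a))) = a :=
  h.apply_apply_of_mem_diagonal (f.trans f) (h.apply_apply_mem_diagonal f)

end Automorphism

section Finite

variable [Fintype V] [DecidableRel G.Adj]

theorem neighborFinset_eq [DecidableEq V] (h : IsFourCycle G a b c d) :
    G.neighborFinset a = {b, d} := by
  ext x
  simp [h.adj_left_iff]

theorem neighborFinset_subset [DecidableEq V] (h : IsFourCycle G a b c d) (x : V) :
    G.neighborFinset x ⊆ {a, b, c, d} := by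
  intro y hy
  rw [SimpleGraph.mem_neighborFinset] at hy
  simpa [mem_insert] using h.mem_support_iff.1 ⟨x, hy.symm⟩

theorem degree_eq_two (h : IsFourCycle G a b c d) : G.degree a = 2 := by
  classical rw [SimpleGraph.degree, h.neighborFinset_eq, card_pair h.ne_bd]

theorem degree_le_two (h : IsFourCycle G a b c d) (x : V) : G.degree x ≤ 2 := by
  by_cases hx : x ∈ G.support
  · obtain ⟨y, hxy⟩ := hx
    obtain ⟨z, w, h'⟩ := h.exists_of_adj hxy
    exact h'.degree_eq_two.le
  · rw [(G.degree_eq_zero_iff_notMem_support x).2 hx]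
    exact Nat.zero_le 2

theorem sum_card_neighborFinset_inter [DecidableEq V] {F : Finset V} (h : IsFourCycle G a b c d)
    (hF : {a, b, c, d} ⊆ F) : ∑ x ∈ F, #(G.neighborFinset x ∩ F) = 8 := by
  have hdegree (x : V) : #(G.neighborFinset x ∩ F) = G.degree x := by
    rw [inter_eq_left.2 ((h.neighborFinset_subset x).trans hF), G.card_neighborFinset_eq_degree]
  calc ∑ x ∈ F, #(G.neighborFinset x ∩ F) = ∑ x ∈ F, G.degree x :=
        sum_congr rfl fun x _ => hdegree x
    _ = ∑ x ∈ {a, b, c, d}, G.degree x := by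
      refine (sum_subset hF fun x _ hx => ?_).symm
      refine (G.degree_eq_zero_iff_notMem_support x).2 fun hsupp => hx ?_
      simpa using h.mem_support_iff.1 hsupp
    _ = 8 := by
      simp [h.pairwise_ne, h.degree_eq_two, h.rotate.degree_eq_two, h.rotate.rotate.degree_eq_two,
        h.rotate.rotate.rotate.degree_eq_two]

end Finite

end IsFourCycle

section EvenDegrees

variable [Fintype V] [DecidableRel G.Adj]

theorem isFourCycle_of_adj (hac : a ≠ c) (hbd : b ≠ d) (hab : G.Adj a b) (hbc : G.Adj b c)
    (hcd : G.Adj c d) (hda : G.Adj d a) (hedges : #G.edgeFinset ≤ 4) : IsFourCycle G a b c d := by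
  classical
  have hdist : a ≠ b ∧ b ≠ c ∧ c ≠ d ∧ d ≠ a := ⟨hab.ne, hbc.ne, hcd.ne, hda.ne⟩
  have heq : {s(a, b), s(b, c), s(c, d), s(d, a)} = G.edgeFinset := by
    refine eq_of_subset_of_card_le ?_ (hedges.trans_eq ?_)
    · simp [insert_subset_iff, hab, hbc, hcd, hda]
    · symm
      simp [card_insert_of_notMem, hdist, hac, hbd, hac.symm, hdist.2.2.2.symm]
  refine ⟨hac, hbd, fun x y => ?_⟩
  rw [← SimpleGraph.mem_edgeSet, ← SimpleGraph.mem_edgeFinset, ← heq]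
  simp only [mem_insert, mem_singleton, Sym2.eq_iff]
  grind

theorem degree_eq_two_of_even_degrees (heven : ∀ x, Even (G.degree x))
    (hedges : #G.edgeFinset = 4) (hx : x ∈ G.support) : G.degree x = 2 := by
  classical
  have htwo : ∀ y ∈ G.support.toFinset, 2 ≤ G.degree y := fun y hy => by
    have hpos := (G.degree_pos_iff_mem_support y).2 (Set.mem_toFinset.1 hy)
    have := heven y
    grind
  have hcard : #G.support.toFinset ≤ 4 := by
    have hsum := card_nsmul_le_sum _ _ 2 htwo
    rw [smul_eq_mul, G.sum_degrees_support_eq_twice_card_edges] at hsum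
    omega
  have hsub : G.neighborFinset x ⊆ G.support.toFinset.erase x := fun y hy => by
    rw [SimpleGraph.mem_neighborFinset] at hy
    exact mem_erase.2 ⟨hy.ne', Set.mem_toFinset.2 ⟨x, hy.symm⟩⟩
  have hle := card_le_card hsub
  rw [card_erase_of_mem (Set.mem_toFinset.2 hx), G.card_neighborFinset_eq_degree] at hle
  have := htwo x (Set.mem_toFinset.2 hx)
  have := heven x
  grind

theorem exists_isFourCycle_of_even_degrees (heven : ∀ x, Even (G.degree x))
    (hedges : #G.edgeFinset = 4) : ∃ a b c d, IsFourCycle G a b c d := by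
  classical
  have hdegree : ∀ x ∈ G.support.toFinset, G.degree x = 2 := fun x hx =>
    degree_eq_two_of_even_degrees heven hedges (Set.mem_toFinset.1 hx)
  have hsupp : #G.support.toFinset = 4 := by
    have hsum := G.sum_degrees_support_eq_twice_card_edges
    rw [sum_const_nat hdegree] at hsum
    omega
  obtain ⟨a, ha⟩ : G.support.toFinset.Nonempty := card_pos.1 (by omega)
  obtain ⟨b, d, hbd, hNa⟩ := card_eq_two.1 (hdegree a ha)
  have hab : G.Adj a b := by simp [← SimpleGraph.mem_neighborFinset, hNa]
  have had : G.Adj a d := by simp [← SimpleGraph.mem_neighborFinset, hNa]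
  obtain ⟨c, hc, hcN⟩ : ∃ c ∈ G.support.toFinset, c ∉ ({a, b, d} : Finset V) :=
    exists_mem_notMem_of_card_lt_card (card_le_three.trans_lt (by omega))
  have hac : ¬ G.Adj a c := fun h => by
    rw [← SimpleGraph.mem_neighborFinset, hNa] at h
    exact hcN (mem_insert_of_mem h)
  have heq : {c, a, b, d} = G.support.toFinset := by
    refine eq_of_subset_of_card_le ?_ (hsupp.trans_le ?_)
    · simp [insert_subset_iff, -Set.subset_toFinset, hab.mem_support_right, had.mem_support_right,
        Set.mem_toFinset.1 ha, Set.mem_toFinset.1 hc]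
    · simp [card_insert_of_notMem hcN, card_insert_of_notMem, hab.ne, had.ne, hbd]
  have hNc : G.neighborFinset c = {b, d} := by
    refine eq_of_subset_of_card_le (fun y hy => ?_) ?_
    · rw [SimpleGraph.mem_neighborFinset] at hy
      have hy' := Set.mem_toFinset.2 hy.mem_support_right
      rw [← heq] at hy'
      have hyc := hy.ne'
      have hya : y ≠ a := fun h => hac (h ▸ hy.symm)
      simpa [hyc, hya] using hy'
    · rw [G.card_neighborFinset_eq_degree, hdegree c hc, card_pair hbd]
  have hcb : G.Adj c b := by simp [← SimpleGraph.mem_neighborFinset, hNc]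
  have hcd : G.Adj c d := by simp [← SimpleGraph.mem_neighborFinset, hNc]
  exact ⟨a, b, c, d, isFourCycle_of_adj (fun h => hcN (h ▸ mem_insert_self a _)) hbd hab hcb.symm
    hcd had.symm hedges.le⟩

end EvenDegrees

end FourCycles

section MaximumSize

variable {n : ℕ} {B : Finset (Finset (Fin n))}

theorem isPTS_and_card_image_of_card_inter_le_one {ι : Type*} [Fintype ι]
    {f : ι → Finset (Fin n)} (hcard : ∀ i, #(f i) = 3)
    (hinter : ∀ i j, i ≠ j → #(f i ∩ f j) ≤ 1) :
    isPTS (univ.image f) ∧ #(univ.image f) = Fintype.card ι := by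
  have heq (i j : ι) (p : Finset (Fin n)) (hp : 2 ≤ #p) (hi : p ⊆ f i) (hj : p ⊆ f j) : i = j := by
    by_contra hne
    have hle := (card_le_card (subset_inter hi hj)).trans (hinter i j hne)
    omega
  refine ⟨⟨by simpa using hcard, fun p hp T₁ h₁ T₂ h₂ hp₁ hp₂ => ?_⟩, ?_⟩
  · obtain ⟨i, -, rfl⟩ := mem_image.1 h₁
    obtain ⟨j, -, rfl⟩ := mem_image.1 h₂
    rw [heq i j p hp.ge hp₁ hp₂]
  · refine card_image_of_injective univ fun i j hij => ?_
    exact heq i j (f i) (by simp [hcard]) subset_rfl hij.subset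

/-- The triples of a partial triple system of order 17, on the points `0, …, 11`, read modulo 12,
and five points at infinity `12, …, 16`. The base triple `{0, 1, 4}` covers the differences 1, 3
and 4 modulo 12. The pairs of difference 6, 5 and 2 split into one, two and two perfect matchings,
which are joined to the points at infinity. -/
def triple17 : Fin 12 ⊕ Fin 6 ⊕ Fin 12 ⊕ Fin 12 ⊕ Fin 2 → Finset (Fin 17) :=
  let point : Fin 12 → Fin 17 := Fin.castLE (by decide)
  Sum.elim (fun i => {point i, point (i + 1), point (i + 4)}) <|
  Sum.elim (fun i => {12, point (i.castLE (by decide)), point (i.castLE (by decide) + 6)}) <|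
  Sum.elim (fun i => {if i.val % 2 = 0 then 13 else 14, point i, point (i + 5)}) <|
  Sum.elim (fun i => {if i.val % 4 < 2 then 15 else 16, point i, point (i + 2)})
    ![{12, 13, 14}, {12, 15, 16}]

theorem exists_isPTS_card_eq_44 : ∃ B : Finset (Finset (Fin 17)), isPTS B ∧ #B = 44 :=
  ⟨univ.image triple17,
    isPTS_and_card_image_of_card_inter_le_one (by decide +kernel) (by decide +kernel)⟩

theorem isPTS.card_mul_self (hB : isPTS B) :
    n * n = n + 2 * #(leaveGraph B).edgeFinset + 6 * #B := by
  have h := hB.card_subsystem_mul_self (isSubsystem_univ B)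
  simpa [SimpleGraph.sum_degrees_eq_twice_card_edges] using h

theorem isPTS.even_degree (hB : isPTS B) (hn : Odd n) (x : Fin n) :
    Even ((leaveGraph B).degree x) := by
  have h := hB.card_subsystem_eq (isSubsystem_univ B) (mem_univ x)
  rw [inter_univ, card_univ, Fintype.card_fin, SimpleGraph.card_neighborFinset_eq_degree] at h
  grind

theorem isMMPTS.exists_isFourCycle_leaveGraph {B : Finset (Finset (Fin 17))} (hB : isMMPTS B) :
    ∃ a b c d, IsFourCycle (leaveGraph B) a b c d := by
  have heven := hB.1.even_degree (by decide)
  refine exists_isFourCycle_of_even_degrees heven ?_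
  have hcount := hB.1.card_mul_self
  obtain ⟨B₀, hB₀, hcard⟩ := exists_isPTS_card_eq_44
  have hmax := hcard.ge.trans (hB.2 B₀ hB₀)
  have hne : #(leaveGraph B).edgeFinset ≠ 1 := fun hone => by
    have hdegree (x : Fin 17) : (leaveGraph B).degree x = 0 := by
      have hle := SimpleGraph.degree_le_card_edgeFinset (G := leaveGraph B) x
      have := heven x
      grind
    have hsum := (leaveGraph B).sum_degrees_eq_twice_card_edges
    simp [hdegree, hone] at hsum
  omega

end MaximumSize

section LeaveFourCycle

variable {n : ℕ} {B : Finset (Finset (Fin n))} {F : Finset (Fin n)} {a b c d : Fin n}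

theorem leave_eq_of_isFourCycle (hC : IsFourCycle (leaveGraph B) a b c d) :
    leave B = {{a, b}, {b, c}, {c, d}, {d, a}} := by
  ext p
  constructor
  · intro hp
    obtain ⟨x, y, -, rfl⟩ := card_eq_two.1 hp.1
    obtain ⟨rfl | rfl, rfl | rfl⟩ | ⟨rfl | rfl, rfl | rfl⟩ := (hC.adj_iff x y).1 hp <;>
      simp [pair_comm]
  · rintro (rfl | rfl | rfl | rfl)
    exacts [hC.adj, hC.rotate.adj, hC.rotate.rotate.adj, hC.reflect.adj.symm]

theorem isPTS.third_diagonal_mem (hB : isPTS B) (hC : IsFourCycle (leaveGraph B) a b c d) :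
    {a, c, third B a c} ∈ B :=
  hB.third_mem hC.ne_ac hC.not_adj_diagonal

theorem isPTS.third_diagonal_ne_third_diagonal (hB : isPTS B) (hQ : ¬ isTypeQ B)
    (hC : IsFourCycle (leaveGraph B) a b c d) : third B a c ≠ third B b d := by
  intro h
  have hmem := hB.third_diagonal_mem hC.rotate
  rw [← h] at hmem
  obtain ⟨hab, hac, had, hbc, hbd, hcd⟩ := hC.pairwise_ne
  exact hQ ⟨a, b, c, d, hab, hac, had, hbc, hbd, hcd, leave_eq_of_isFourCycle hC, _,
    hB.third_diagonal_mem hC, hmem⟩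

theorem isPTS.third_diagonal_notMem (hB : isPTS B) (hC : IsFourCycle (leaveGraph B) a b c d) :
    third B a c ∉ ({a, b, c, d} : Finset (Fin n)) := by
  have hmem := hB.third_diagonal_mem hC
  have hne := hB.ne_of_mem hmem
  have hab := hC.adj.2 _ hmem
  have had := hC.reflect.adj.2 _ hmem
  grind

theorem isPTS.card_subsystem_mod_six (hB : isPTS B) (hC : IsFourCycle (leaveGraph B) a b c d)
    (hF : IsSubsystem B F) (hsub : {a, b, c, d} ⊆ F) : #F % 6 = 5 := by
  have hflags := hB.card_subsystem_eq hF (hsub (mem_insert_self a _))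
  rw [inter_eq_left.2 ((hC.neighborFinset_subset a).trans hsub),
    SimpleGraph.card_neighborFinset_eq_degree, hC.degree_eq_two] at hflags
  have hcount := hB.card_subsystem_mul_self hF
  rw [hC.sum_card_neighborFinset_inter hsub] at hcount
  have hmod := congrArg (· % 6) hcount
  have hcases : #F % 6 = 1 ∨ #F % 6 = 3 ∨ #F % 6 = 5 := by omega
  rcases hcases with h | h | h <;> simp [Nat.mul_mod, Nat.add_mod, h] at hmod ⊢

theorem isPTS.two_mul_card_lt_of_ne_univ (hB : isPTS B) (hC : IsFourCycle (leaveGraph B) a b c d)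
    (hn : 9 < n) (hF : IsSubsystem B F) (hne : F ≠ univ) : 2 * #F < n := by
  obtain ⟨w, hw⟩ : ∃ w, w ∉ F := by simpa [eq_univ_iff_forall] using hne
  have hle := hB.two_mul_card_subsystem_lt hF hw
  have hdegree : #((leaveGraph B).neighborFinset w ∩ F) ≤ 2 :=
    (card_le_card inter_subset_left).trans (hC.degree_le_two w)
  have hcompl : #({a, b, c, d} : Finset (Fin n)) < #Fᶜ := by
    rw [card_compl, Fintype.card_fin]
    exact card_le_four.trans_lt (by omega)
  obtain ⟨z, hzF, hz⟩ := exists_mem_notMem_of_card_lt_card hcompl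
  have hisolated : (leaveGraph B).neighborFinset z = ∅ := by
    rw [← card_eq_zero, SimpleGraph.card_neighborFinset_eq_degree,
      SimpleGraph.degree_eq_zero_iff_notMem_support, hC.mem_support_iff]
    simpa using hz
  simpa [hisolated] using hB.two_mul_card_subsystem_lt hF (mem_compl.1 hzF)

theorem isPTS.eleven_le_card_subsystem (hB : isPTS B) (hQ : ¬ isTypeQ B)
    (hC : IsFourCycle (leaveGraph B) a b c d) (hF : IsSubsystem B F)
    (hsub : {a, b, c, d} ⊆ F) : 11 ≤ #F := by
  have hac := hB.third_diagonal_notMem hC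
  have hbd := hB.third_diagonal_notMem hC.rotate
  have hne := hB.third_diagonal_ne_third_diagonal hQ hC
  have hfour : #({a, b, c, d} : Finset (Fin n)) = 4 := by
    have hne := hC.pairwise_ne
    grind
  have hsix : {third B a c, third B b d, a, b, c, d} ⊆ F := by
    have := hF a (hsub (by simp)) c (hsub (by simp))
    have := hF b (hsub (by simp)) d (hsub (by simp))
    grind
  have hcard := card_le_card hsix
  rw [card_insert_of_notMem (by grind), card_insert_of_notMem (by grind), hfour] at hcard
  have hmod := hB.card_subsystem_mod_six hC hF hsub
  omega

theorem isPTS.eq_univ_of_subset_subsystem (hB : isPTS B) (hQ : ¬ isTypeQ B)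
    (hC : IsFourCycle (leaveGraph B) a b c d) (hn : n < 23) (hF : IsSubsystem B F)
    (hsub : {a, b, c, d} ⊆ F) : F = univ := by
  have huniv := hB.eleven_le_card_subsystem hQ hC (isSubsystem_univ B) (subset_univ _)
  rw [card_univ, Fintype.card_fin] at huniv
  have hcard := hB.eleven_le_card_subsystem hQ hC hF hsub
  by_contra hne
  have hlt := hB.two_mul_card_lt_of_ne_univ hC (by omega) hF hne
  omega

end LeaveFourCycle

section Automorphisms

open scoped Pointwise

variable {n : ℕ} {B : Finset (Finset (Fin n))} {a b c d x y : Fin n} {T : Finset (Fin n)}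
  {g h : Equiv.Perm (Fin n)}

theorem isAuto_iff_mem_stabilizer :
    isAuto B g ↔ g ∈ MulAction.stabilizer (Equiv.Perm (Fin n)) B := by
  rw [MulAction.mem_stabilizer_finset']
  rfl

theorem isAuto.pow (hg : isAuto B g) (k : ℕ) : isAuto B (g ^ k) :=
  isAuto_iff_mem_stabilizer.2 (pow_mem (isAuto_iff_mem_stabilizer.1 hg) k)

theorem isAuto.mul (hg : isAuto B g) (hh : isAuto B h) : isAuto B (g * h) :=
  isAuto_iff_mem_stabilizer.2
    (mul_mem (isAuto_iff_mem_stabilizer.1 hg) (isAuto_iff_mem_stabilizer.1 hh))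

theorem isAuto.inv (hg : isAuto B g) : isAuto B g⁻¹ :=
  isAuto_iff_mem_stabilizer.2 (inv_mem (isAuto_iff_mem_stabilizer.1 hg))

theorem isAuto.adj_of_adj_apply (hg : isAuto B g) (hadj : (leaveGraph B).Adj (g x) (g y)) :
    (leaveGraph B).Adj x y := by
  refine ⟨card_pair (ne_of_apply_ne g hadj.ne), fun T hT hsub => hadj.2 _ (hg T hT) ?_⟩
  simpa using image_subset_image (f := g) hsub

/-- The action of an automorphism of `B` on the leave. -/
def isAuto.leaveGraphIso (hg : isAuto B g) : leaveGraph B ≃g leaveGraph B where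
  toEquiv := g
  map_rel_iff' := ⟨hg.adj_of_adj_apply, fun hadj => hg.inv.adj_of_adj_apply (by simpa using hadj)⟩

theorem isAuto.map_third (hB : isPTS B) (hg : isAuto B g) (x y : Fin n) :
    g (third B x y) = third B (g x) (g y) := by
  obtain rfl | hxy := eq_or_ne x y
  · rw [hB.third_self, hB.third_self]
  by_cases hadj : (leaveGraph B).Adj x y
  · have hadj' : (leaveGraph B).Adj (g x) (g y) := hg.leaveGraphIso.map_adj_iff.2 hadj
    rw [hB.third_of_adj hadj, hB.third_of_adj hadj']
  · have himage := hg _ (hB.third_mem hxy hadj)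
    rw [image_insert, image_insert, image_singleton] at himage
    exact (hB.third_eq_of_mem himage).symm

theorem isAuto.isSubsystem_compl_support (hB : isPTS B) (hg : isAuto B g) :
    IsSubsystem B g.supportᶜ := by
  intro x hx y hy
  simp only [mem_compl, Equiv.Perm.notMem_support] at hx hy ⊢
  rw [hg.map_third hB, hx, hy]

theorem isAuto.eq_one_of_apply_eq (hB : isPTS B) (hQ : ¬ isTypeQ B)
    (hC : IsFourCycle (leaveGraph B) a b c d) (hn : n < 23) (hg : isAuto B g) (ha : g a = a)
    (hb : g b = b) : g = 1 := by
  have hc : g c = c := hC.apply_opposite_of_apply_eq hg.leaveGraphIso ha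
  have hd : g d = d := hC.rotate.apply_opposite_of_apply_eq hg.leaveGraphIso hb
  have hfixed : g.supportᶜ = univ :=
    hB.eq_univ_of_subset_subsystem hQ hC hn (hg.isSubsystem_compl_support hB)
      (by simp [insert_subset_iff, ha, hb, hc, hd])
  rwa [compl_eq_univ_iff, Equiv.Perm.support_eq_empty_iff] at hfixed

theorem isAuto.pow_four_eq_one (hB : isPTS B) (hQ : ¬ isTypeQ B)
    (hC : IsFourCycle (leaveGraph B) a b c d) (hn : n < 23) (hg : isAuto B g) : g ^ 4 = 1 :=
  (hg.pow 4).eq_one_of_apply_eq hB hQ hC hn (hC.apply_four hg.leaveGraphIso)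
    (hC.rotate.apply_four hg.leaveGraphIso)

theorem isAuto.third_eq_apply_of_notMem_support (hB : isPTS B) (hg : isAuto B g)
    (hinv : ∀ y, g (g y) = y) (hfixed : ∀ y, g y = y ↔ y = x)
    (hy : y ∉ (leaveGraph B).support) : third B x y = g y := by
  have hadj (z : Fin n) : ¬ (leaveGraph B).Adj y z := fun h => hy h.mem_support_left
  have hthird : third B y (g y) = x := by
    rw [← hfixed, hg.map_third hB, hinv, hB.third_comm (hadj _)]
  calc third B x y = third B y x := (hB.third_comm (hadj x)).symm
    _ = third B y (third B y (g y)) := by rw [hthird]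
    _ = g y := hB.third_involutive y (g y)

theorem isAuto.third_diagonal_eq_of_forall_apply_eq_iff (hB : isPTS B)
    (hC : IsFourCycle (leaveGraph B) a b c d) (hg : isAuto B g) (hinv : ∀ y, g (g y) = y)
    (hfixed : ∀ y, g y = y ↔ y = x) : third B a c = x := by
  have hx : x ∉ (leaveGraph B).support := by
    rintro ⟨y, hxy⟩
    obtain ⟨z, w, hC'⟩ := hC.exists_of_adj hxy
    have hz : g z = z := hC'.apply_opposite_of_apply_eq hg.leaveGraphIso ((hfixed x).2 rfl)
    exact hC'.ne_ac ((hfixed z).1 hz).symm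
  have hxa : x ≠ a := fun h => hx (h ▸ hC.mem_support)
  have hmem : {x, a, third B x a} ∈ B := hB.third_mem hxa fun h => hx h.mem_support_left
  have hsupp : third B x a ∈ (leaveGraph B).support := by
    by_contra hnotMem
    have hga : g a = third B x a := by
      rw [← hinv (third B x a), ← hg.third_eq_apply_of_notMem_support hB hinv hfixed hnotMem,
        hB.third_involutive]
    exact hnotMem (hga ▸ iso_apply_mem_support hg.leaveGraphIso hC.mem_support)
  have hthird : third B x a = c := by
    refine hC.eq_opposite hsupp (hB.ne_of_mem hmem).2.2.symm fun hadj => ?_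
    exact hadj.2 _ hmem (by simp)
  rw [hthird, insert_comm, pair_comm] at hmem
  exact hB.third_eq_of_mem hmem

theorem isAuto.neighborFinset_inter_compl_support (hB : isPTS B) (hQ : ¬ isTypeQ B)
    (hC : IsFourCycle (leaveGraph B) a b c d) (hn : n < 23) (hg : isAuto B g) (hne : g ≠ 1)
    (hx : x ∈ g.supportᶜ) : (leaveGraph B).neighborFinset x ∩ g.supportᶜ = ∅ := by
  refine eq_empty_of_forall_notMem fun y hy => hne ?_
  simp only [mem_inter, mem_compl, Equiv.Perm.notMem_support, SimpleGraph.mem_neighborFinset]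
    at hx hy
  obtain ⟨z, w, hC'⟩ := hC.exists_of_adj hy.1
  exact hg.eq_one_of_apply_eq hB hQ hC' hn hx hy.2

theorem isAuto.card_compl_support_ne_one (hB : isPTS B) (hQ : ¬ isTypeQ B)
    (hC : IsFourCycle (leaveGraph B) a b c d) (hg : isAuto B g) (hinv : g ^ 2 = 1) :
    #g.supportᶜ ≠ 1 := by
  intro hone
  obtain ⟨x, hx⟩ := card_eq_one.1 hone
  have hfixed (y : Fin n) : g y = y ↔ y = x := by
    rw [← Equiv.Perm.notMem_support, ← mem_compl, hx, mem_singleton]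
  have hgg (y : Fin n) : g (g y) = y := by simpa [sq] using congrArg (· y) hinv
  refine hB.third_diagonal_ne_third_diagonal hQ hC ?_
  rw [hg.third_diagonal_eq_of_forall_apply_eq_iff hB hC hgg hfixed,
    hg.third_diagonal_eq_of_forall_apply_eq_iff hB hC.rotate hgg hfixed]

section OrderSeventeen

variable {B : Finset (Finset (Fin 17))} {a b c d : Fin 17} {g h : Equiv.Perm (Fin 17)}

theorem isAuto.card_compl_support_of_involution (hB : isPTS B) (hQ : ¬ isTypeQ B)
    (hC : IsFourCycle (leaveGraph B) a b c d) (hg : isAuto B g) (hinv : g ^ 2 = 1) (hne : g ≠ 1) :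
    #g.supportᶜ = 3 ∨ #g.supportᶜ = 7 := by
  have hF := hg.isSubsystem_compl_support hB
  have hcount := hB.card_subsystem_mul_self hF
  rw [sum_eq_zero fun x hx => card_eq_zero.2
    (hg.neighborFinset_inter_compl_support hB hQ hC (by simp) hne hx)] at hcount
  have hodd : #g.supportᶜ % 2 = 1 := by
    have hmod := Equiv.Perm.card_compl_support_modEq (p := 2) (n := 1) (by rwa [pow_one])
    simpa [Nat.ModEq] using hmod
  have hlt := hB.two_mul_card_lt_of_ne_univ hC (by simp) hF (by simpa using hne)
  have hone := hg.card_compl_support_ne_one hB hQ hC hinv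
  have hle : #g.supportᶜ ≤ 8 := by omega
  interval_cases #g.supportᶜ <;> omega

theorem isAuto.sign_of_involution (hB : isPTS B) (hQ : ¬ isTypeQ B)
    (hC : IsFourCycle (leaveGraph B) a b c d) (hg : isAuto B g) (hinv : g ^ 2 = 1) (hne : g ≠ 1) :
    Equiv.Perm.sign g = -1 := by
  have hfixed : Fintype.card (Function.fixedPoints g) = #g.supportᶜ := by
    rw [Equiv.Perm.card_fixedPoints, Equiv.Perm.sum_cycleType, card_compl]
  rw [Equiv.Perm.sign_of_pow_two_eq_one hinv, hfixed, Fintype.card_fin]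
  obtain h | h := hg.card_compl_support_of_involution hB hQ hC hinv hne <;> rw [h] <;> rfl

theorem isAuto.sign_eq_neg_one (hB : isPTS B) (hQ : ¬ isTypeQ B)
    (hC : IsFourCycle (leaveGraph B) a b c d) (hg : isAuto B g) (hne : g ≠ 1) :
    Equiv.Perm.sign g = -1 := by
  refine hg.sign_of_involution hB hQ hC ?_ hne
  by_contra hsq
  have hinv : (g ^ 2) ^ 2 = 1 := by rw [← pow_mul, hg.pow_four_eq_one hB hQ hC (by simp)]
  have hsign := (hg.pow 2).sign_of_involution hB hQ hC hinv hsq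
  rw [map_pow, Int.units_sq] at hsign
  exact absurd hsign (by decide)

theorem isAuto.eq_of_sign_eq (hB : isPTS B) (hQ : ¬ isTypeQ B)
    (hC : IsFourCycle (leaveGraph B) a b c d) (hg : isAuto B g) (hh : isAuto B h)
    (hsign : Equiv.Perm.sign g = Equiv.Perm.sign h) : g = h := by
  by_contra hne
  have hodd := (hg.mul hh.inv).sign_eq_neg_one hB hQ hC (mul_inv_eq_one.not.2 hne)
  rw [Equiv.Perm.sign_mul, Equiv.Perm.sign_inv, hsign, Int.units_mul_self] at hodd
  exact absurd hodd (by decide)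

end OrderSeventeen

end Automorphisms

theorem mmpts17_typeN_aut_le_two :
    ∀ B : Finset (Finset (Fin 17)), isMMPTS B → ¬ isTypeQ B →
      Nat.card {φ : Equiv.Perm (Fin 17) // isAuto B φ} ≤ 2 := by
  intro B hB hQ
  obtain ⟨a, b, c, d, hC⟩ := hB.exists_isFourCycle_leaveGraph
  have hinj : Function.Injective
      fun g : {φ : Equiv.Perm (Fin 17) // isAuto B φ} => Equiv.Perm.sign g.1 :=
    fun g h hsign => Subtype.ext (g.2.eq_of_sign_eq hB.1 hQ hC h.2 hsign)
  calc Nat.card {φ : Equiv.Perm (Fin 17) // isAuto B φ}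
    _ ≤ Nat.card ℤˣ := Nat.card_le_card_of_injective _ hinj
    _ = 2 := by simp
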